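/- Let q = 2p with p ≥ 2, λ = 2cos(π/q), 1/2 < α < 1/λ, and let Ω_α be the region of the even-index natural extension (the union ⋃_{n=1}^{2p−1} J_n × [0,H_n] described below). Then the map 𝒯_α(x,y) = (T_α(x), 1/(d(x)λ + ε(x)y)) preserves the measure on Ω_α with density (1+xy)^{−2} with respect to two-dimensional Lebesgue measure: for every Borel set A ⊆ Ω_α, ∫_{𝒯_α^{−1}(A) ∩ Ω_α} (1+xy)^{−2} dx dy = ∫_A (1+xy)^{−2} dx dy. -/

import Mathlib

open Set MeasureTheory

/-- The digit function `d(x) = ⌊|1/(xλ)| + 1 - α⌋` of the α-Rosen continued fraction. -/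
noncomputable def dfun (lam α x : ℝ) : ℤ := ⌊|1 / (x * lam)| + 1 - α⌋

/-- The α-Rosen continued fraction map `T_α`. -/
noncomputable def Tmap (lam α x : ℝ) : ℝ :=
  if x = 0 then 0 else |1 / x| - lam * (dfun lam α x : ℝ)

/-- The two-dimensional natural extension map `𝒯_α(x, y) = (T_α(x), 1/(d(x)λ + ε(x)y))`. -/
noncomputable def Tnat (lam α : ℝ) (z : ℝ × ℝ) : ℝ × ℝ :=
  (Tmap lam α z.1, 1 / ((dfun lam α z.1 : ℝ) * lam + Real.sign z.1 * z.2))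

/-!
The Jacobian determinant of `𝒯_α` compensates the change of the density, so the image of any set on
which `𝒯_α` is injective has the same mass as the set itself. If `𝒯_α` maps `Ω_α` to itself and is
injective almost everywhere, then, the mass of `Ω_α` being finite, its image is almost all of `Ω_α`
and invariance follows; surjectivity need not be checked.

The orbits of `ℓ₀` and `r₀` interlace, so `Ω_α` is the region under an increasing step function. On
the branch `x < 0` with digit `1`, `𝒯_α` moves each strip two places to the right, and the recursion
`η (k + 2) = 1 / (λ - η k)` of the heights is what keeps it under the step function; all other
branches land under the two lowest steps. Injectivity can only fail between points with first
coordinates of opposite signs, whose second coordinates would have to add up to `λ`, which the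
heights do not allow.
-/

theorem measurableSet_inter_preimage_of_continuousOn {X Y : Type*}
    [TopologicalSpace X] [MeasurableSpace X] [OpensMeasurableSpace X]
    [TopologicalSpace Y] [MeasurableSpace Y] [BorelSpace Y] {f : X → Y} {s : Set X} {t : Set Y}
    (hf : ContinuousOn f s) (hs : MeasurableSet s) (ht : MeasurableSet t) :
    MeasurableSet (s ∩ f ⁻¹' t) := by
  rw [← Subtype.image_preimage_coe]
  exact hs.subtype_image (hf.domRestrict.measurable ht)

theorem ae_eq_of_subset_of_setIntegral_eq {X : Type*} [MeasurableSpace X] {μ : Measure X}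
    {g : X → ℝ} {s t : Set X} (hs : MeasurableSet s) (ht : MeasurableSet t)
    (hst : s ⊆ t) (hpos : ∀ x ∈ t, 0 < g x) (hg : IntegrableOn g t μ)
    (h : ∫ x in s, g x ∂μ = ∫ x in t, g x ∂μ) : s =ᵐ[μ] t := by
  refine hst.eventuallyLE.antisymm (ae_le_set.2 ?_)
  have hdiff : ∫ x in t \ s, g x ∂μ = 0 := by rw [setIntegral_sdiff hs hg hst, h, sub_self]
  by_contra hne
  have hnonneg : 0 ≤ᵐ[μ.restrict (t \ s)] g :=
    (ae_restrict_mem (ht.diff hs)).mono fun x hx => (hpos x hx.1).le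
  have hsupp : Function.support g ∩ (t \ s) = t \ s :=
    inter_eq_right.2 fun x hx => (hpos x hx.1).ne'
  refine ((setIntegral_pos_iff_support_of_nonneg_ae hnonneg (hg.mono_set sdiff_subset)).2 ?_).ne'
    hdiff
  rwa [hsupp, pos_iff_ne_zero]

section JacobianInvariance

variable {E : Type*} [NormedAddCommGroup E] [NormedSpace ℝ E] [FiniteDimensional ℝ E]
  [MeasurableSpace E] [BorelSpace E] {μ : Measure E} [μ.IsAddHaarMeasure]
  {f : E → E} {f' : E → E →L[ℝ] E} {g : E → ℝ} {s Ω A : Set E}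

theorem setIntegral_image_eq_of_abs_det_mul_comp_eq (hs : MeasurableSet s)
    (hf' : ∀ z ∈ s, HasFDerivWithinAt f (f' z) s z) (hf : InjOn f s)
    (hg : ∀ z ∈ s, |(f' z).det| * g (f z) = g z) :
    ∫ z in f '' s, g z ∂μ = ∫ z in s, g z ∂μ := by
  rw [integral_image_eq_integral_abs_det_fderiv_smul μ hs hf' hf]
  exact setIntegral_congr_fun hs hg

theorem setIntegral_preimage_inter_eq_of_injOn (hs : MeasurableSet s) (hΩ : MeasurableSet Ω)
    (hsΩ : s =ᵐ[μ] Ω) (hf' : ∀ z ∈ s, HasFDerivWithinAt f (f' z) s z) (hinj : InjOn f s)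
    (hmaps : MapsTo f s Ω) (hjac : ∀ z ∈ s, |(f' z).det| * g (f z) = g z)
    (hpos : ∀ z ∈ Ω, 0 < g z) (hg : IntegrableOn g Ω μ)
    (hA : MeasurableSet A) (hAΩ : A ⊆ Ω) :
    ∫ z in f ⁻¹' A ∩ Ω, g z ∂μ = ∫ z in A, g z ∂μ := by
  have himage : f '' s =ᵐ[μ] Ω := by
    refine ae_eq_of_subset_of_setIntegral_eq (measurable_image_of_fderivWithin hs hf' hinj) hΩ
      hmaps.image_subset hpos hg ?_
    rw [setIntegral_image_eq_of_abs_det_mul_comp_eq hs hf' hinj hjac, setIntegral_congr_set hsΩ]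
  have hmeas : MeasurableSet (s ∩ f ⁻¹' A) :=
    measurableSet_inter_preimage_of_continuousOn (fun z hz => (hf' z hz).continuousWithinAt) hs hA
  calc ∫ z in f ⁻¹' A ∩ Ω, g z ∂μ
      = ∫ z in s ∩ f ⁻¹' A, g z ∂μ := by
        rw [inter_comm]
        exact setIntegral_congr_set (hsΩ.symm.inter (ae_eq_refl _))
    _ = ∫ z in f '' (s ∩ f ⁻¹' A), g z ∂μ :=
        (setIntegral_image_eq_of_abs_det_mul_comp_eq hmeas
          (fun z hz => (hf' z hz.1).mono inter_subset_left) (hinj.mono inter_subset_left)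
          fun z hz => hjac z hz.1).symm
    _ = ∫ z in f '' s ∩ A, g z ∂μ := by rw [image_inter_preimage]
    _ = ∫ z in Ω ∩ A, g z ∂μ := setIntegral_congr_set (himage.inter (ae_eq_refl _))
    _ = ∫ z in A, g z ∂μ := by rw [inter_eq_right.2 hAΩ]

end JacobianInvariance

theorem det_prodMap_toSpanSingleton {R : Type*} [CommRing R] [TopologicalSpace R]
    [ContinuousMul R] (a b : R) :
    ((ContinuousLinearMap.toSpanSingleton R a).prodMap
      (ContinuousLinearMap.toSpanSingleton R b)).det = a * b := by
  simp [ContinuousLinearMap.det, ContinuousLinearMap.coe_prodMap, LinearMap.det_prodMap,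
    LinearMap.det_ring]

section RosenMap

variable {lam α x : ℝ} {z : ℝ × ℝ}

theorem abs_one_div_eq_sign_div (x : ℝ) : |1 / x| = Real.sign x / x := by
  rcases lt_trichotomy x 0 with h | rfl | h
  · rw [Real.sign_of_neg h, abs_of_neg (one_div_neg.2 h), neg_div]
  · simp
  · rw [Real.sign_of_pos h, abs_of_pos (one_div_pos.2 h)]

theorem dfun_eq_iff (hlam : 0 < lam) {d : ℤ} :
    dfun lam α x = d ↔ |1 / x| - lam * d ∈ Ico ((α - 1) * lam) (α * lam) := by
  obtain ⟨u, hu⟩ : ∃ u, |1 / x| = u * lam := ⟨|1 / x| / lam, (div_mul_cancel₀ _ hlam.ne').symm⟩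
  have hdiv : |1 / (x * lam)| = u := by
    rw [← div_div, abs_div (1 / x), abs_of_pos hlam, hu, mul_div_cancel_right₀ _ hlam.ne']
  rw [dfun, Int.floor_eq_iff, hdiv, hu, mem_Ico, ← mul_le_mul_iff_left₀ hlam,
    ← mul_lt_mul_iff_left₀ hlam]
  constructor <;> rintro ⟨h₁, h₂⟩ <;> constructor <;> linarith

theorem Tmap_of_ne_zero (hx : x ≠ 0) : Tmap lam α x = |1 / x| - lam * dfun lam α x := if_neg hx

theorem Tmap_mem_Ico (hlam : 0 < lam) (hx : x ≠ 0) :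
    Tmap lam α x ∈ Ico ((α - 1) * lam) (α * lam) := by
  rw [Tmap_of_ne_zero hx]
  exact (dfun_eq_iff hlam).1 rfl

theorem Tmap_eq_of_mem_Ico (hlam : 0 < lam) (hx : x ≠ 0) {d : ℤ}
    (h : |1 / x| - lam * d ∈ Ico ((α - 1) * lam) (α * lam)) :
    Tmap lam α x = |1 / x| - lam * d := by
  rw [Tmap_of_ne_zero hx, (dfun_eq_iff hlam).2 h]

theorem one_le_dfun (hlam : 0 < lam) (hx : x ≠ 0) (h : α * lam * |x| ≤ 1) : 1 ≤ dfun lam α x := by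
  have hα : α ≤ |1 / (x * lam)| := by
    rw [abs_div, abs_one, abs_mul, abs_of_pos hlam, le_div_iff₀ (by positivity)]
    linarith
  rw [dfun, Int.le_floor, Int.cast_one]
  linarith

theorem Tnat_of_ne_zero (hx : z.1 ≠ 0) :
    Tnat lam α z = (Real.sign z.1 / z.1 - lam * dfun lam α z.1,
      1 / (dfun lam α z.1 * lam + Real.sign z.1 * z.2)) := by
  rw [Tnat, Tmap_of_ne_zero hx, abs_one_div_eq_sign_div]

/-- The set outside of which the digit function is locally constant (except at `0`). -/
def digitJumps (lam α : ℝ) : Set ℝ := {x | ∃ k : ℤ, |1 / (x * lam)| + 1 - α = k}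

theorem countable_digitJumps (hlam : lam ≠ 0) (α : ℝ) : (digitJumps lam α).Countable := by
  have hinj : Function.Injective fun x : ℝ => 1 / (x * lam) := fun x y h =>
    mul_left_injective₀ hlam (inv_injective (by simpa only [one_div] using h))
  refine ((countable_range fun k : ℤ => (k : ℝ) - 1 + α).union
    (countable_range fun k : ℤ => -((k : ℝ) - 1 + α))).preimage hinj |>.mono ?_
  rintro x ⟨k, hk⟩
  rcases abs_choice (1 / (x * lam)) with h | h <;> rw [h] at hk
  · exact .inl ⟨k, by linarith⟩
  · exact .inr ⟨k, by linarith⟩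

theorem eventually_dfun_eq (hlam : lam ≠ 0) (hx : x ≠ 0) (hd : x ∉ digitJumps lam α) :
    ∀ᶠ t in nhds x, dfun lam α t = dfun lam α x := by
  have hcont : ContinuousAt (fun t : ℝ => |1 / (t * lam)| + 1 - α) x := by
    have : x * lam ≠ 0 := mul_ne_zero hx hlam
    fun_prop (disch := assumption)
  have hlt : (dfun lam α x : ℝ) < |1 / (x * lam)| + 1 - α :=
    (Int.floor_le _).lt_of_ne fun h => hd ⟨_, h.symm⟩
  filter_upwards [hcont.eventually_const_lt hlt,
    hcont.eventually_lt_const (Int.lt_floor_add_one _)] with t ht₁ ht₂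
  exact Int.floor_eq_iff.2 ⟨ht₁.le, ht₂⟩

theorem Tnat_eq_Tnat_iff {w : ℝ × ℝ} (hz : z.1 ≠ 0) (hw : w.1 ≠ 0) :
    Tnat lam α z = Tnat lam α w ↔
      Real.sign z.1 / z.1 - lam * dfun lam α z.1 = Real.sign w.1 / w.1 - lam * dfun lam α w.1 ∧
      dfun lam α z.1 * lam + Real.sign z.1 * z.2
        = dfun lam α w.1 * lam + Real.sign w.1 * w.2 := by
  rw [Tnat_of_ne_zero hz, Tnat_of_ne_zero hw, Prod.mk.injEq, one_div, one_div, inv_inj]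

theorem eventually_sign_eq (hx : x ≠ 0) : ∀ᶠ t in nhds x, Real.sign t = Real.sign x := by
  rcases hx.lt_or_gt with h | h
  · filter_upwards [eventually_lt_nhds h] with t ht
    rw [Real.sign_of_neg ht, Real.sign_of_neg h]
  · filter_upwards [eventually_gt_nhds h] with t ht
    rw [Real.sign_of_pos ht, Real.sign_of_pos h]

/-- The derivative of `Tnat` at a point where the digit is locally constant: both coordinates
separate there, so it is diagonal. -/
noncomputable def TnatDeriv (lam α : ℝ) (z : ℝ × ℝ) : ℝ × ℝ →L[ℝ] ℝ × ℝ :=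
  (ContinuousLinearMap.toSpanSingleton ℝ (-Real.sign z.1 / z.1 ^ 2)).prodMap
    (ContinuousLinearMap.toSpanSingleton ℝ
      (-Real.sign z.1 / (dfun lam α z.1 * lam + Real.sign z.1 * z.2) ^ 2))

theorem hasFDerivAt_Tnat (hlam : lam ≠ 0) (hx : z.1 ≠ 0) (hd : z.1 ∉ digitJumps lam α)
    (hD : dfun lam α z.1 * lam + Real.sign z.1 * z.2 ≠ 0) :
    HasFDerivAt (Tnat lam α) (TnatDeriv lam α z) z := by
  set s := Real.sign z.1
  set d := (dfun lam α z.1 : ℝ)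
  have hfst : HasDerivAt (fun x => s / x - lam * d) (-s / z.1 ^ 2) z.1 := by
    have h := ((hasDerivAt_inv hx).const_mul s).sub_const (lam * d)
    rwa [mul_neg, ← div_eq_mul_inv, ← neg_div] at h
  have hsnd : HasDerivAt (fun y => 1 / (d * lam + s * y)) (-s / (d * lam + s * z.2) ^ 2) z.2 := by
    have h := (((hasDerivAt_id' z.2).const_mul s).const_add (d * lam)).inv hD
    simp only [one_div]
    rwa [mul_one] at h
  refine (HasFDerivAt.prodMap z hfst.hasFDerivAt hsnd.hasFDerivAt).congr_of_eventuallyEq ?_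
  have htendsto : Filter.Tendsto Prod.fst (nhds z) (nhds z.1) := continuous_fst.continuousAt
  filter_upwards [htendsto.eventually (eventually_dfun_eq hlam hx hd),
    htendsto.eventually (eventually_sign_eq hx), htendsto.eventually_ne hx] with w hw₁ hw₂ hw₃
  rw [Tnat_of_ne_zero hw₃, hw₁, hw₂]
  rfl

theorem abs_det_TnatDeriv_mul (hx : z.1 ≠ 0)
    (hD : dfun lam α z.1 * lam + Real.sign z.1 * z.2 ≠ 0) :
    |(TnatDeriv lam α z).det| * (1 / (1 + (Tnat lam α z).1 * (Tnat lam α z).2) ^ 2)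
      = 1 / (1 + z.1 * z.2) ^ 2 := by
  have hsq : Real.sign z.1 ^ 2 = 1 := by
    rcases Real.sign_apply_eq_of_ne_zero z.1 hx with h | h <;> norm_num [h]
  rw [TnatDeriv, det_prodMap_toSpanSingleton, Tnat_of_ne_zero hx]
  generalize Real.sign z.1 = s at *
  generalize (dfun lam α z.1 : ℝ) = d at *
  obtain ⟨x, y⟩ := z
  dsimp only at *
  have hdet : -s / x ^ 2 * (-s / (d * lam + s * y) ^ 2) = 1 / (x * (d * lam + s * y)) ^ 2 := by
    rw [div_mul_div_comm, neg_mul_neg, ← sq, hsq, mul_pow]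
  have hdens : 1 + (s / x - lam * d) * (1 / (d * lam + s * y))
      = s * (1 + x * y) / (x * (d * lam + s * y)) := by
    generalize hDs : d * lam + s * y = D at *
    rw [show lam * d = D - s * y by linarith]
    field_simp
    ring
  rw [hdet, hdens, abs_of_nonneg (by positivity), div_pow, mul_pow s, hsq, one_mul, one_div_div,
    one_div_mul_eq_div, div_div_cancel_left' (by positivity), one_div]

end RosenMap

section Staircase

variable {n i : ℕ} {e η : ℕ → ℝ} {z : ℝ × ℝ}

/-- The region below the step function that takes the value `η k` on `[e k, e (k + 1))`, for
`k < n`. The domain `Ω_α` has this shape, its breakpoints being the orbits of `ℓ₀` and `r₀`. -/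
def staircase (n : ℕ) (e η : ℕ → ℝ) : Set (ℝ × ℝ) :=
  ⋃ k ∈ Finset.range n, Ico (e k) (e (k + 1)) ×ˢ Icc 0 (η k)

theorem measurableSet_staircase (n : ℕ) (e η : ℕ → ℝ) : MeasurableSet (staircase n e η) :=
  Finset.measurableSet_biUnion _ fun _ _ => measurableSet_Ico.prod measurableSet_Icc

theorem mem_staircase : z ∈ staircase n e η ↔
    ∃ k < n, z.1 ∈ Ico (e k) (e (k + 1)) ∧ z.2 ∈ Icc 0 (η k) := by
  simp only [staircase, mem_iUnion, Finset.mem_range, mem_prod, exists_prop]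

theorem exists_mem_Ico_succ {α : Type*} [LinearOrder α] {e : ℕ → α} {x : α} {i n : ℕ}
    (hin : i ≤ n) (hi : e i ≤ x) (hn : x < e n) :
    ∃ k, i ≤ k ∧ k < n ∧ x ∈ Ico (e k) (e (k + 1)) := by
  induction n, hin using Nat.le_induction with
  | base => exact absurd hn hi.not_gt
  | succ n hin ih =>
    rcases lt_or_ge x (e n) with h | h
    · obtain ⟨k, hik, hkn, hk⟩ := ih h
      exact ⟨k, hik, hkn.trans n.lt_succ_self, hk⟩
    · exact ⟨n, hin, n.lt_succ_self, h, hn⟩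

theorem mem_staircase_of_le (hη : MonotoneOn η (Iio n)) (hi : i < n)
    (hx : z.1 ∈ Ico (e i) (e n)) (hy : z.2 ∈ Icc 0 (η i)) : z ∈ staircase n e η := by
  obtain ⟨k, hik, hkn, hk⟩ := exists_mem_Ico_succ hi.le hx.1 hx.2
  exact mem_staircase.2 ⟨k, hkn, hk, hy.1, hy.2.trans (hη hi hkn hik)⟩

theorem snd_le_of_mem_staircase (he : MonotoneOn e (Iic n)) (hη : MonotoneOn η (Iio n))
    (hz : z ∈ staircase n e η) (hi : i < n) (hx : z.1 < e (i + 1)) : z.2 ≤ η i := by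
  obtain ⟨k, hkn, hk, hy⟩ := mem_staircase.1 hz
  have hki : k ≤ i := by
    by_contra! hik
    exact (hx.trans_le (he (Nat.succ_le_of_lt hi) hkn.le hik)).not_ge hk.1
  exact hy.2.trans (hη hkn hi hki)

theorem staircase_subset_prod (he : MonotoneOn e (Iic (n + 1))) (hη : MonotoneOn η (Iio (n + 1))) :
    staircase (n + 1) e η ⊆ Ico (e 0) (e (n + 1)) ×ˢ Icc 0 (η n) := by
  intro z hz
  obtain ⟨k, hkn, hk, hy⟩ := mem_staircase.1 hz
  have hkn' : k ≤ n := Nat.le_of_lt_succ hkn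
  exact ⟨⟨(he (Nat.zero_le _) hkn.le (Nat.zero_le k)).trans hk.1,
    hk.2.trans_le (he (Nat.succ_le_of_lt hkn) (mem_Iic.2 le_rfl) hkn)⟩, hy.1,
    hy.2.trans (hη hkn n.lt_succ_self hkn')⟩

theorem biUnion_range_two_mul_add_one {X : Type*} (F : ℕ → Set X) (N : ℕ) :
    ⋃ k ∈ Finset.range (2 * N + 1), F k =
      (⋃ n ∈ Finset.Icc 1 N, F (2 * (n - 1))) ∪ (⋃ n ∈ Finset.Icc 1 N, F (2 * (n - 1) + 1))
        ∪ F (2 * N) := by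
  ext x
  simp only [mem_union, mem_iUnion, Finset.mem_range, Finset.mem_Icc, exists_prop]
  constructor
  · rintro ⟨k, hk, hx⟩
    obtain ⟨n, rfl | rfl⟩ := Nat.even_or_odd' k
    · rcases (show n ≤ N by omega).lt_or_eq with hn | rfl
      · exact .inl (.inl ⟨n + 1, ⟨by omega, hn⟩, hx⟩)
      · exact .inr hx
    · exact .inl (.inr ⟨n + 1, ⟨by omega, by omega⟩, hx⟩)
  · rintro ((⟨n, hn, hx⟩ | ⟨n, hn, hx⟩) | hx)
    exacts [⟨_, by omega, hx⟩, ⟨_, by omega, hx⟩, ⟨_, by omega, hx⟩]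

end Staircase

section NullPart

theorem sdiff_preimage_fst_union_preimage_snd_ae_eq {X Y : Type*} [MeasurableSpace X]
    [MeasurableSpace Y] {μ : Measure X} {ν : Measure Y} [NullSingletonClass μ]
    [NullSingletonClass ν] [SFinite μ] [SFinite ν] {C : Set X} {D : Set Y} (hC : C.Countable)
    (hD : D.Countable) (s : Set (X × Y)) :
    (s \ (Prod.fst ⁻¹' C ∪ Prod.snd ⁻¹' D) : Set (X × Y)) =ᵐ[μ.prod ν] s :=
  sdiff_null_ae_eq_self <| measure_union_null
    (Measure.quasiMeasurePreserving_fst.preimage_null (hC.measure_zero μ))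
    (Measure.quasiMeasurePreserving_snd.preimage_null (hD.measure_zero ν))

/-- The staircase without the countably many horizontal and vertical lines on which `Tnat` may
fail to be differentiable or injective. -/
def regularPart (lam α : ℝ) (n : ℕ) (e η : ℕ → ℝ) : Set (ℝ × ℝ) :=
  staircase n e η \
    (Prod.fst ⁻¹' insert 0 (range e ∪ digitJumps lam α) ∪ Prod.snd ⁻¹' insert 0 (range η))

variable {lam : ℝ}

theorem measurableSet_regularPart (hlam : lam ≠ 0) (α : ℝ) (n : ℕ) (e η : ℕ → ℝ) :
    MeasurableSet (regularPart lam α n e η) :=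
  (measurableSet_staircase n e η).diff <|
    (measurable_fst (((countable_range e).union (countable_digitJumps hlam α)).insert
      0).measurableSet).union (measurable_snd ((countable_range η).insert 0).measurableSet)

theorem regularPart_ae_eq (hlam : lam ≠ 0) (α : ℝ) (n : ℕ) (e η : ℕ → ℝ) :
    regularPart lam α n e η =ᵐ[volume] staircase n e η :=
  sdiff_preimage_fst_union_preimage_snd_ae_eq
    (((countable_range e).union (countable_digitJumps hlam α)).insert 0)
    ((countable_range η).insert 0) _

theorem mem_regularPart {α : ℝ} {n : ℕ} {e η : ℕ → ℝ} {z : ℝ × ℝ} :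
    z ∈ regularPart lam α n e η ↔ z ∈ staircase n e η ∧ z.1 ≠ 0 ∧ (∀ k, z.1 ≠ e k) ∧
      z.1 ∉ digitJumps lam α ∧ z.2 ≠ 0 ∧ ∀ k, z.2 ≠ η k := by
  simp only [regularPart, mem_sdiff, mem_union, mem_preimage, mem_insert_iff, mem_range, not_or,
    not_exists, ne_eq, and_assoc, eq_comm]

end NullPart

section RosenStaircase

/-- The properties of the orbits of `ℓ₀` and `r₀` on which the argument for `q = m + 4` rests: `e`
enumerates the endpoints `ℓ₀ < r₁ < ℓ₁ < r₂ < ⋯ < r₀`, and the last two fields say that `Tmap` acts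
on the negative ones by `e k ↦ e (k + 2)` and that the two orbits meet afterwards. -/
structure IsRosenOrbit (lam α : ℝ) (m : ℕ) (e : ℕ → ℝ) : Prop where
  one_lt_lam : 1 < lam
  half_lt_alpha : 1 / 2 < α
  alpha_mul_lam_lt_one : α * lam < 1
  strictMonoOn_break : StrictMonoOn e (Iic (m + 3))
  break_zero : e 0 = (α - 1) * lam
  break_last : e (m + 3) = α * lam
  break_neg : e (m + 1) < 0
  break_pos : 0 < e (m + 2)
  break_one : e 1 = 1 / (α * lam) - lam
  break_add_two : ∀ k ≤ m, e (k + 2) = -1 / e k - lam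
  one_div_break : 1 / e (m + 2) = -1 / e (m + 1) - lam

/-- The properties of the heights `η k = H_{k+1}` of the strips on which the argument for
`q = m + 4` rests. -/
structure IsRosenHeight (lam : ℝ) (m : ℕ) (η : ℕ → ℝ) : Prop where
  monotoneOn_height : MonotoneOn η (Iio (m + 3))
  height_zero : η 0 = 1 / (lam + 1)
  height_one : η 1 = 1 / lam
  height_add_two : ∀ k ≤ m, η (k + 2) = 1 / (lam - η k)
  height_add_one : η (m + 1) = lam / 2
  height_last : η (m + 2) = 1

/-- The combined hypotheses under which `staircase (m + 3) e η` is the domain `Ω_α` for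
`q = m + 4`. -/
structure IsRosenStaircase (lam α : ℝ) (m : ℕ) (e η : ℕ → ℝ) : Prop
    extends IsRosenOrbit lam α m e, IsRosenHeight lam m η

variable {lam α x D : ℝ} {m : ℕ} {e η : ℕ → ℝ} {z w : ℝ × ℝ}

namespace IsRosenOrbit

theorem lam_pos (h : IsRosenOrbit lam α m e) : 0 < lam := zero_lt_one.trans h.one_lt_lam

theorem alpha_mul_lam_pos (h : IsRosenOrbit lam α m e) : 0 < α * lam :=
  mul_pos (one_half_pos.trans h.half_lt_alpha) h.lam_pos

theorem break_lt (h : IsRosenOrbit lam α m e) {i j : ℕ} (hij : i < j) (hj : j ≤ m + 3) :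
    e i < e j :=
  h.strictMonoOn_break (mem_Iic.2 (hij.le.trans hj)) (mem_Iic.2 hj) hij

theorem break_le (h : IsRosenOrbit lam α m e) {i j : ℕ} (hij : i ≤ j) (hj : j ≤ m + 3) :
    e i ≤ e j :=
  h.strictMonoOn_break.monotoneOn (mem_Iic.2 (hij.trans hj)) (mem_Iic.2 hj) hij

theorem break_mem_Ico (h : IsRosenOrbit lam α m e) {k : ℕ} (hk : k < m + 3) :
    e k ∈ Ico ((α - 1) * lam) (α * lam) :=
  ⟨h.break_zero ▸ h.break_le (Nat.zero_le k) hk.le, h.break_last ▸ h.break_lt hk le_rfl⟩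

theorem one_div_alpha_mul_lam_lt_one_div_break (h : IsRosenOrbit lam α m e) :
    1 / (α * lam) < 1 / e (m + 2) :=
  one_div_lt_one_div_of_lt h.break_pos <|
    h.break_last ▸ h.break_lt (Nat.lt_succ_self _) le_rfl

theorem lt_break_of_dfun_eq_one (h : IsRosenOrbit lam α m e) (hx : x < 0)
    (hd : dfun lam α x = 1) : x < e (m + 1) := by
  have hT := (dfun_eq_iff h.lam_pos).1 hd
  rw [abs_of_neg (one_div_neg.2 hx), Int.cast_one] at hT
  by_contra! hge
  have := one_div_le_one_div_of_neg_of_le hx hge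
  have := h.one_div_alpha_mul_lam_lt_one_div_break
  have := one_lt_one_div h.alpha_mul_lam_pos h.alpha_mul_lam_lt_one
  have := h.one_div_break
  rw [neg_div] at this
  linarith [hT.2, h.alpha_mul_lam_lt_one]

theorem Tmap_break (h : IsRosenOrbit lam α m e) {k : ℕ} (hk : k ≤ m) :
    Tmap lam α (e k) = e (k + 2) := by
  have hneg : e k < 0 := (h.break_lt (Nat.lt_succ_of_le hk) (by omega)).trans h.break_neg
  have hstep : |1 / e k| - lam * (1 : ℤ) = e (k + 2) := by
    rw [abs_of_neg (one_div_neg.2 hneg), h.break_add_two k hk, neg_div, Int.cast_one, mul_one]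
  rw [Tmap_eq_of_mem_Ico h.lam_pos hneg.ne (d := 1) (hstep ▸ h.break_mem_Ico (by omega)), hstep]

theorem Tmap_alpha_mul_lam (h : IsRosenOrbit lam α m e) :
    Tmap lam α (α * lam) = e 1 := by
  have hpos := h.alpha_mul_lam_pos
  have hstep : |1 / (α * lam)| - lam * (1 : ℤ) = e 1 := by
    rw [abs_of_pos (one_div_pos.2 hpos), h.break_one, Int.cast_one, mul_one]
  rw [Tmap_eq_of_mem_Ico h.lam_pos hpos.ne' (d := 1) (hstep ▸ h.break_mem_Ico (by omega)), hstep]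

theorem Tmap_iterate_break (h : IsRosenOrbit lam α m e) {i n : ℕ}
    (hn : 2 * n + i ≤ m + 2) : (Tmap lam α)^[n] (e i) = e (2 * n + i) := by
  induction n with
  | zero => simp
  | succ n ih =>
    rw [Function.iterate_succ_apply', ih (by omega), h.Tmap_break (by omega)]
    congr 1
    ring

theorem Tmap_iterate_alpha_mul_lam (h : IsRosenOrbit lam α m e) {n : ℕ}
    (hn : 2 * n ≤ m + 1) : (Tmap lam α)^[n + 1] (α * lam) = e (2 * n + 1) := by
  rw [Function.iterate_succ_apply, h.Tmap_alpha_mul_lam, h.Tmap_iterate_break (by omega)]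

theorem staircase_eq {P : ℕ} {Hodd Heven : ℕ → ℝ}
    (h : IsRosenOrbit lam α (2 * P) e) (hodd : ∀ n, Hodd (n + 1) = η (2 * n))
    (heven : ∀ n, Heven (n + 1) = η (2 * n + 1)) :
    staircase (2 * P + 3) e η =
      (⋃ n ∈ Finset.Icc 1 (P + 1), Ico ((Tmap lam α)^[n - 1] ((α - 1) * lam))
        ((Tmap lam α)^[n] (α * lam)) ×ˢ Icc 0 (Hodd n))
      ∪ (⋃ n ∈ Finset.Icc 1 (P + 1), Ico ((Tmap lam α)^[n] (α * lam))
        ((Tmap lam α)^[n] ((α - 1) * lam)) ×ˢ Icc 0 (Heven n))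
      ∪ Ico ((Tmap lam α)^[P + 1] ((α - 1) * lam)) (α * lam) ×ˢ Icc 0 (Hodd (P + 2)) := by
  have hℓ {n : ℕ} (hn : n ≤ P + 1) : (Tmap lam α)^[n] ((α - 1) * lam) = e (2 * n) := by
    rw [← h.break_zero]
    exact h.Tmap_iterate_break (i := 0) (by omega)
  have hr {n : ℕ} (hn : n ≤ P) : (Tmap lam α)^[n + 1] (α * lam) = e (2 * n + 1) :=
    h.Tmap_iterate_alpha_mul_lam (by omega)
  have hlast : e (2 * (P + 1) + 1) = α * lam := h.break_last
  refine (biUnion_range_two_mul_add_one _ (P + 1)).trans ?_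
  rw [hℓ le_rfl, hlast, hodd]
  congr 2 <;> refine iUnion₂_congr fun n hn => ?_
  all_goals
    obtain ⟨k, rfl⟩ := Nat.exists_eq_add_of_le' (Finset.mem_Icc.1 hn).1
    have hk : k ≤ P := Nat.le_of_succ_le_succ (Finset.mem_Icc.1 hn).2
  · rw [Nat.add_sub_cancel, hℓ (by omega), hr hk, hodd]
  · rw [Nat.add_sub_cancel, hr hk, hℓ (by omega), heven, mul_add_one]

end IsRosenOrbit

theorem IsRosenHeight.height_eq (h : IsRosenHeight lam m η) : η m = lam - 1 := by
  have := h.height_add_two m le_rfl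
  rw [h.height_last, eq_comm, one_div, inv_eq_one] at this
  linarith

namespace IsRosenStaircase

theorem mem_prod (h : IsRosenStaircase lam α m e η) (hz : z ∈ staircase (m + 3) e η) :
    z ∈ Ico ((α - 1) * lam) (α * lam) ×ˢ Icc 0 1 := by
  have := staircase_subset_prod h.strictMonoOn_break.monotoneOn h.monotoneOn_height hz
  rwa [h.break_zero, h.break_last, h.height_last] at this

theorem one_le_dfun (h : IsRosenStaircase lam α m e η) (hz : z ∈ staircase (m + 3) e η)
    (hx : z.1 ≠ 0) : 1 ≤ dfun lam α z.1 := by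
  obtain ⟨⟨hx₁, hx₂⟩, -⟩ := h.mem_prod hz
  have habs : |z.1| ≤ α * lam := abs_le.2 ⟨by nlinarith [h.lam_pos, h.half_lt_alpha], hx₂.le⟩
  refine _root_.one_le_dfun h.lam_pos hx ?_
  nlinarith [h.alpha_mul_lam_pos, h.alpha_mul_lam_lt_one]

theorem denom_ne_zero (h : IsRosenStaircase lam α m e η) (hz : z ∈ staircase (m + 3) e η)
    (hx : z.1 ≠ 0) : dfun lam α z.1 * lam + Real.sign z.1 * z.2 ≠ 0 := by
  obtain ⟨-, hy₁, hy₂⟩ := h.mem_prod hz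
  have hd : (1 : ℝ) ≤ dfun lam α z.1 := mod_cast h.one_le_dfun hz hx
  have hlam := h.one_lt_lam
  rcases Real.sign_apply_eq_of_ne_zero z.1 hx with hs | hs <;> rw [hs] <;> nlinarith

theorem mk_one_div_mem_of_lam_add_one_le (h : IsRosenStaircase lam α m e η)
    (hx : x ∈ Ico ((α - 1) * lam) (α * lam)) (hD : lam + 1 ≤ D) :
    (x, 1 / D) ∈ staircase (m + 3) e η := by
  have := h.lam_pos
  refine mem_staircase_of_le (i := 0) h.monotoneOn_height (by omega) ?_
    ⟨one_div_nonneg.2 (by linarith), ?_⟩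
  · rwa [h.break_zero, h.break_last]
  · rw [h.height_zero]
    exact one_div_le_one_div_of_le (by positivity) hD

theorem mk_one_div_mem_of_lam_le (h : IsRosenStaircase lam α m e η)
    (hx : x ∈ Ico (e 1) (α * lam)) (hD : lam ≤ D) : (x, 1 / D) ∈ staircase (m + 3) e η := by
  have := h.lam_pos
  refine mem_staircase_of_le (i := 1) h.monotoneOn_height (by omega) ?_
    ⟨one_div_nonneg.2 (by linarith), ?_⟩
  · rwa [h.break_last]
  · rw [h.height_one]
    exact one_div_le_one_div_of_le this hD

theorem Tnat_mem_of_pos (h : IsRosenStaircase lam α m e η) (hz : z ∈ staircase (m + 3) e η)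
    (hx : 0 < z.1) : Tnat lam α z ∈ staircase (m + 3) e η := by
  obtain ⟨⟨-, hx₂⟩, hy₁, -⟩ := h.mem_prod hz
  have hd := h.one_le_dfun hz hx.ne'
  have hlam := h.one_lt_lam
  have hT := Tmap_mem_Ico (α := α) h.lam_pos hx.ne'
  rw [Tmap_of_ne_zero hx.ne', abs_one_div_eq_sign_div] at hT
  rw [Tnat_of_ne_zero hx.ne']
  rw [Real.sign_of_pos hx] at hT ⊢
  rcases hd.eq_or_lt with hd | hd
  · rw [← hd, Int.cast_one] at hT ⊢
    refine h.mk_one_div_mem_of_lam_le ⟨?_, hT.2⟩ (by linarith)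
    rw [h.break_one]
    linarith [one_div_le_one_div_of_le hx hx₂.le]
  · have hd' : (2 : ℝ) ≤ dfun lam α z.1 := mod_cast hd
    exact h.mk_one_div_mem_of_lam_add_one_le hT (by nlinarith)

theorem Tnat_mem_of_dfun_eq_one (h : IsRosenStaircase lam α m e η)
    (hz : z ∈ staircase (m + 3) e η) (hx : z.1 < 0) (hd : dfun lam α z.1 = 1) :
    Tnat lam α z ∈ staircase (m + 3) e η := by
  obtain ⟨k, hk, ⟨hxk, -⟩, -, hy₂⟩ := mem_staircase.1 hz
  have hkm : k ≤ m := by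
    by_contra! hmk
    exact (h.lt_break_of_dfun_eq_one hx hd).not_ge ((h.break_le hmk hk.le).trans hxk)
  have hT := Tmap_mem_Ico (α := α) h.lam_pos hx.ne
  rw [Tmap_of_ne_zero hx.ne, abs_one_div_eq_sign_div, hd] at hT
  rw [Tnat_of_ne_zero hx.ne, hd]
  rw [Real.sign_of_neg hx, Int.cast_one] at hT ⊢
  have hηk : η k ≤ lam - 1 := h.height_eq ▸ h.monotoneOn_height hk (mem_Iio.2 (by omega)) hkm
  refine mem_staircase_of_le (i := k + 2) h.monotoneOn_height (by omega) ⟨?_, ?_⟩ ⟨?_, ?_⟩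
  · rw [h.break_add_two k hkm, neg_div, neg_div]
    linarith [one_div_le_one_div_of_neg_of_le hx hxk]
  · rw [h.break_last]
    exact hT.2
  · exact one_div_nonneg.2 (by linarith)
  · rw [h.height_add_two k hkm]
    exact one_div_le_one_div_of_le (by linarith) (by linarith)

theorem Tnat_mem_of_two_le_dfun (h : IsRosenStaircase lam α m e η)
    (hz : z ∈ staircase (m + 3) e η) (hx : z.1 < 0) (hd : 2 ≤ dfun lam α z.1) :
    Tnat lam α z ∈ staircase (m + 3) e η := by
  obtain ⟨-, -, hy₂⟩ := h.mem_prod hz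
  have hlam := h.one_lt_lam
  have hT := Tmap_mem_Ico (α := α) h.lam_pos hx.ne
  rw [Tmap_of_ne_zero hx.ne, abs_one_div_eq_sign_div] at hT
  rw [Tnat_of_ne_zero hx.ne]
  rw [Real.sign_of_neg hx] at hT ⊢
  rcases lt_or_ge z.1 (e (m + 1)) with hxe | hxe
  · have hy := snd_le_of_mem_staircase h.strictMonoOn_break.monotoneOn h.monotoneOn_height hz
      (by omega) hxe
    rw [h.height_eq] at hy
    have hd' : (2 : ℝ) ≤ dfun lam α z.1 := mod_cast hd
    exact h.mk_one_div_mem_of_lam_add_one_le hT (by nlinarith)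
  rcases hd.eq_or_lt with hd | hd
  · rw [← hd, Int.cast_ofNat] at hT ⊢
    refine h.mk_one_div_mem_of_lam_le ⟨?_, hT.2⟩ (by linarith)
    have hkey := h.one_div_break
    have := h.one_div_alpha_mul_lam_lt_one_div_break
    have := one_div_le_one_div_of_neg_of_le hx hxe
    rw [neg_div] at hkey ⊢
    rw [h.break_one]
    linarith
  · have hd' : (3 : ℝ) ≤ dfun lam α z.1 := mod_cast hd
    exact h.mk_one_div_mem_of_lam_add_one_le hT (by nlinarith)

theorem Tnat_mem (h : IsRosenStaircase lam α m e η) (hz : z ∈ staircase (m + 3) e η)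
    (hx : z.1 ≠ 0) : Tnat lam α z ∈ staircase (m + 3) e η := by
  rcases hx.lt_or_gt with hx' | hx'
  · rcases (h.one_le_dfun hz hx).eq_or_lt with hd | hd
    · exact h.Tnat_mem_of_dfun_eq_one hz hx' hd.symm
    · exact h.Tnat_mem_of_two_le_dfun hz hx' hd
  · exact h.Tnat_mem_of_pos hz hx'

theorem eq_of_Tnat_eq_of_sign_eq (h : IsRosenStaircase lam α m e η)
    (hz : z ∈ staircase (m + 3) e η) (hw : w ∈ staircase (m + 3) e η) (hz₀ : z.1 ≠ 0)
    (hw₀ : w.1 ≠ 0) (hsign : Real.sign z.1 = Real.sign w.1)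
    (heq : Tnat lam α z = Tnat lam α w) : z = w := by
  obtain ⟨-, hyz₁, hyz₂⟩ := h.mem_prod hz
  obtain ⟨-, hyw₁, hyw₂⟩ := h.mem_prod hw
  obtain ⟨hfst, hsnd⟩ := (Tnat_eq_Tnat_iff hz₀ hw₀).1 heq
  have hlam := h.one_lt_lam
  have hs₀ : Real.sign w.1 ≠ 0 := Real.sign_eq_zero_iff.not.2 hw₀
  rw [hsign] at hfst hsnd
  have hd : dfun lam α z.1 = dfun lam α w.1 := by
    rw [← sub_eq_zero, ← Int.abs_lt_one_iff, abs_lt]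
    rify
    rcases Real.sign_apply_eq_of_ne_zero w.1 hw₀ with hs | hs <;> rw [hs] at hsnd <;>
      constructor <;> nlinarith
  rw [hd] at hfst hsnd
  refine Prod.ext (inv_injective (mul_left_cancel₀ hs₀ ?_))
    (mul_left_cancel₀ hs₀ (add_left_cancel hsnd))
  rw [← div_eq_mul_inv, ← div_eq_mul_inv, sub_left_injective hfst]

/-- Equal second coordinates force `z.2 + w.2 = lam`, that is `-1 / w.1 = 1 / z.1 + lam`. This map
from `z.1 > 0` to `w.1 < 0` exchanges `e (m + 2)` with `e (m + 1)`, across which the heights drop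
too much for the sum to be `lam`. -/
theorem Tnat_ne_of_pos_of_neg (h : IsRosenStaircase lam α m e η)
    (hz : z ∈ regularPart lam α (m + 3) e η) (hw : w ∈ regularPart lam α (m + 3) e η)
    (hz₀ : 0 < z.1) (hw₀ : w.1 < 0) : Tnat lam α z ≠ Tnat lam α w := by
  obtain ⟨hzS, -, -, -, hyz, hηz⟩ := mem_regularPart.1 hz
  obtain ⟨hwS, -, hew, -, -, hηw⟩ := mem_regularPart.1 hw
  obtain ⟨-, hyz₁, hyz₂⟩ := h.mem_prod hzS
  obtain ⟨-, hyw₁, hyw₂⟩ := h.mem_prod hwS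
  intro heq
  obtain ⟨hfst, hsnd⟩ := (Tnat_eq_Tnat_iff hz₀.ne' hw₀.ne).1 heq
  have hlam := h.one_lt_lam
  have he := h.strictMonoOn_break.monotoneOn
  rw [Real.sign_of_pos hz₀, Real.sign_of_neg hw₀] at hfst hsnd
  have hyz₀ : 0 < z.2 := lt_of_le_of_ne hyz₁ hyz.symm
  have hd : dfun lam α w.1 = dfun lam α z.1 + 1 := by
    rw [← sub_eq_iff_eq_add', ← sub_eq_zero, ← Int.abs_lt_one_iff, abs_lt]
    rify
    constructor <;> nlinarith
  rw [hd, Int.cast_add, Int.cast_one] at hfst hsnd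
  have hsum : z.2 + w.2 = lam := by linarith
  have hkey := h.one_div_break
  rw [neg_div] at hfst hkey
  rcases lt_or_ge z.1 (e (m + 2)) with hxz | hxz
  · have hyz' := (snd_le_of_mem_staircase he h.monotoneOn_height hzS (by omega) hxz).lt_of_ne
      (hηz _)
    have hyw' := (snd_le_of_mem_staircase he h.monotoneOn_height hwS (i := m + 1) (by omega)
      (hw₀.trans h.break_pos)).lt_of_ne (hηw _)
    rw [h.height_add_one] at hyz' hyw'
    linarith
  · have hxw : w.1 < e (m + 1) := by
      refine lt_of_le_of_ne ((one_div_le_one_div_of_neg h.break_neg hw₀).1 ?_) (hew _)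
      linarith [one_div_le_one_div_of_le h.break_pos hxz]
    have hyw' := (snd_le_of_mem_staircase he h.monotoneOn_height hwS (by omega) hxw).lt_of_ne
      (hηw _)
    rw [h.height_eq] at hyw'
    linarith

theorem injOn_Tnat (h : IsRosenStaircase lam α m e η) :
    InjOn (Tnat lam α) (regularPart lam α (m + 3) e η) := by
  intro z hz w hw heq
  obtain ⟨hzS, hz₀, -⟩ := mem_regularPart.1 hz
  obtain ⟨hwS, hw₀, -⟩ := mem_regularPart.1 hw
  rcases hz₀.lt_or_gt with hz' | hz' <;> rcases hw₀.lt_or_gt with hw' | hw'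
  · exact h.eq_of_Tnat_eq_of_sign_eq hzS hwS hz₀ hw₀
      (by rw [Real.sign_of_neg hz', Real.sign_of_neg hw']) heq
  · exact absurd heq.symm (h.Tnat_ne_of_pos_of_neg hw hz hw' hz')
  · exact absurd heq (h.Tnat_ne_of_pos_of_neg hz hw hz' hw')
  · exact h.eq_of_Tnat_eq_of_sign_eq hzS hwS hz₀ hw₀
      (by rw [Real.sign_of_pos hz', Real.sign_of_pos hw']) heq

theorem one_sub_le_one_add_mul (h : IsRosenStaircase lam α m e η)
    (hz : z ∈ staircase (m + 3) e η) : 1 - α * lam ≤ 1 + z.1 * z.2 := by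
  obtain ⟨⟨hx, -⟩, hy₁, hy₂⟩ := h.mem_prod hz
  have hx' : 0 ≤ z.1 + α * lam := by nlinarith [h.half_lt_alpha, h.lam_pos]
  nlinarith [mul_nonneg hx' hy₁, h.alpha_mul_lam_pos]

theorem one_add_mul_pos (h : IsRosenStaircase lam α m e η) (hz : z ∈ staircase (m + 3) e η) :
    0 < 1 + z.1 * z.2 :=
  (sub_pos.2 h.alpha_mul_lam_lt_one).trans_le (h.one_sub_le_one_add_mul hz)

theorem integrableOn_density (h : IsRosenStaircase lam α m e η) :
    IntegrableOn (fun z : ℝ × ℝ => 1 / (1 + z.1 * z.2) ^ 2) (staircase (m + 3) e η) := by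
  have hfinite : volume (staircase (m + 3) e η) ≠ ⊤ :=
    measure_ne_top_of_subset (fun z hz => prod_mono_left Ico_subset_Icc_self (h.mem_prod hz))
      (isCompact_Icc.prod isCompact_Icc).measure_ne_top
  have hgap : 0 < 1 - α * lam := sub_pos.2 h.alpha_mul_lam_lt_one
  refine Measure.integrableOn_of_bounded hfinite (M := 1 / (1 - α * lam) ^ 2)
    (by fun_prop : Measurable _).aestronglyMeasurable
    ((ae_restrict_iff' (measurableSet_staircase _ _ _)).2 (.of_forall fun z hz => ?_))
  rw [Real.norm_of_nonneg (by positivity)]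
  gcongr
  exact h.one_sub_le_one_add_mul hz

theorem setIntegral_preimage_inter (h : IsRosenStaircase lam α m e η) {A : Set (ℝ × ℝ)}
    (hA : MeasurableSet A) (hAΩ : A ⊆ staircase (m + 3) e η) :
    ∫ z in Tnat lam α ⁻¹' A ∩ staircase (m + 3) e η, 1 / (1 + z.1 * z.2) ^ 2
      = ∫ z in A, 1 / (1 + z.1 * z.2) ^ 2 := by
  have hlam := h.lam_pos.ne'
  refine setIntegral_preimage_inter_eq_of_injOn (measurableSet_regularPart hlam α (m + 3) e η)
    (measurableSet_staircase _ _ _) (regularPart_ae_eq hlam α (m + 3) e η)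
    (f' := TnatDeriv lam α) (fun z hz => ?_) h.injOn_Tnat (fun z hz => ?_) (fun z hz => ?_)
    (fun z hz => one_div_pos.2 (pow_pos (h.one_add_mul_pos hz) 2)) h.integrableOn_density hA hAΩ
  all_goals obtain ⟨hzS, hz₀, -, hd, -⟩ := mem_regularPart.1 hz
  · exact (hasFDerivAt_Tnat hlam hz₀ hd (h.denom_ne_zero hzS hz₀)).hasFDerivWithinAt
  · exact h.Tnat_mem hzS hz₀
  · exact abs_det_TnatDeriv_mul hz₀ (h.denom_ne_zero hzS hz₀)

end IsRosenStaircase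

end RosenStaircase

section OrbitDenom

variable {lam r θ : ℝ} {P : ℕ}

/-- Denominators linearising `x ↦ -1 / x - lam`: the quotient
`-orbitDenom lam r (k + 2) / orbitDenom lam r k` runs through the orbits of `r - lam` (`k` even) and
of `1 / r - lam` (`k` odd). -/
def orbitDenom (lam r : ℝ) : ℕ → ℝ
  | 0 => 1
  | 1 => r
  | 2 => lam - r
  | 3 => r * lam - 1
  | k + 4 => lam * orbitDenom lam r (k + 2) - orbitDenom lam r k

theorem orbitDenom_add_four (lam r : ℝ) (k : ℕ) :
    orbitDenom lam r (k + 4) = lam * orbitDenom lam r (k + 2) - orbitDenom lam r k := rfl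

/-- The quotient sequence increases because this Casoratian is periodic in `k`. -/
theorem orbitDenom_mul_lt (hr : lam < 2 * r) (hr₁ : r ^ 2 < 1) (k : ℕ) :
    orbitDenom lam r (k + 3) * orbitDenom lam r k
      < orbitDenom lam r (k + 2) * orbitDenom lam r (k + 1) := by
  induction k using Nat.twoStepInduction with
  | zero =>
    simp only [orbitDenom]
    linarith
  | one =>
    simp only [orbitDenom]
    linarith
  | more k ih _ =>
    rw [show k + 2 + 3 = k + 1 + 4 from rfl, orbitDenom_add_four, orbitDenom_add_four]
    linarith

theorem sin_add_two_mul (a θ : ℝ) :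
    Real.sin ((a + 2) * θ) = 2 * Real.cos θ * Real.sin ((a + 1) * θ) - Real.sin (a * θ) := by
  rw [show (a + 2) * θ = (a + 1) * θ + θ by ring, show a * θ = (a + 1) * θ - θ by ring,
    Real.sin_add, Real.sin_sub]
  ring

theorem sin_mul_orbitDenom_two_mul (r θ : ℝ) (n : ℕ) :
    Real.sin θ * orbitDenom (2 * Real.cos θ) r (2 * n)
      = Real.sin ((n + 1) * θ) - r * Real.sin (n * θ) := by
  induction n using Nat.twoStepInduction with
  | zero => simp [orbitDenom]
  | one =>
    simp only [orbitDenom, Nat.cast_one, one_add_one_eq_two, one_mul, Real.sin_two_mul]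
    ring
  | more n ih ih' =>
    have hrec := sin_add_two_mul n θ
    have hrec' := sin_add_two_mul (n + 1) θ
    rw [show 2 * (n + 2) = 2 * n + 4 by ring, orbitDenom_add_four]
    push_cast at *
    rw [show (n : ℝ) + 2 + 1 = n + 1 + 2 by ring]
    linear_combination 2 * Real.cos θ * ih' - ih - hrec' + r * hrec

theorem sin_mul_orbitDenom_two_mul_add_one (r θ : ℝ) (n : ℕ) :
    Real.sin θ * orbitDenom (2 * Real.cos θ) r (2 * n + 1)
      = r * Real.sin ((n + 1) * θ) - Real.sin (n * θ) := by
  induction n using Nat.twoStepInduction with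
  | zero => simp [orbitDenom, mul_comm]
  | one =>
    simp only [orbitDenom, Nat.cast_one, one_add_one_eq_two, one_mul, Real.sin_two_mul]
    ring
  | more n ih ih' =>
    have hrec := sin_add_two_mul n θ
    have hrec' := sin_add_two_mul (n + 1) θ
    rw [show 2 * (n + 2) + 1 = 2 * n + 1 + 4 by ring, orbitDenom_add_four]
    push_cast at *
    rw [show (n : ℝ) + 2 + 1 = n + 1 + 2 by ring]
    linear_combination 2 * Real.cos θ * ih' - ih - r * hrec' + hrec

theorem nat_mul_mem_Icc (hθ₀ : 0 < θ) (hθ : (P + 2) * θ = Real.pi / 2) {n : ℕ} (hn : n ≤ P + 2) :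
    n * θ ∈ Icc 0 (Real.pi / 2) := by
  have hn' : (n : ℝ) ≤ P + 2 := mod_cast hn
  exact ⟨by positivity, hθ ▸ mul_le_mul_of_nonneg_right hn' hθ₀.le⟩

theorem sin_pos_of_add_two_mul_eq (hθ₀ : 0 < θ) (hθ : (P + 2) * θ = Real.pi / 2) :
    0 < Real.sin θ :=
  Real.sin_pos_of_pos_of_lt_pi hθ₀ (by nlinarith [Real.pi_pos, (P.cast_nonneg : (0 : ℝ) ≤ P)])

theorem orbitDenom_two_mul_pos (hθ₀ : 0 < θ) (hθ : (P + 2) * θ = Real.pi / 2) (hr : r < 1) {n : ℕ}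
    (hn : n ≤ P + 1) : 0 < orbitDenom (2 * Real.cos θ) r (2 * n) := by
  have hsin := sin_pos_of_add_two_mul_eq hθ₀ hθ
  obtain ⟨hn₀, hn₁⟩ := nat_mul_mem_Icc hθ₀ hθ (hn.trans (Nat.le_succ _))
  have hlt : Real.sin (n * θ) < Real.sin ((n + 1) * θ) :=
    Real.sin_lt_sin_of_lt_of_le_pi_div_two (by linarith [Real.pi_pos])
      (mod_cast (nat_mul_mem_Icc hθ₀ hθ (Nat.succ_le_succ hn)).2) (by linarith)
  have hnonneg := Real.sin_nonneg_of_nonneg_of_le_pi hn₀ (by linarith [Real.pi_pos])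
  refine pos_of_mul_pos_right ?_ hsin.le
  rw [sin_mul_orbitDenom_two_mul]
  nlinarith

theorem orbitDenom_two_mul_add_one_pos (hθ₀ : 0 < θ) (hθ : (P + 2) * θ = Real.pi / 2)
    (hr : Real.cos θ < r) {n : ℕ} (hn : n ≤ P + 1) :
    0 < orbitDenom (2 * Real.cos θ) r (2 * n + 1) := by
  have hsin := sin_pos_of_add_two_mul_eq hθ₀ hθ
  have hangle := nat_mul_mem_Icc hθ₀ hθ (Nat.succ_le_succ hn)
  push_cast at hangle
  have hsin' : 0 < Real.sin ((n + 1) * θ) :=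
    Real.sin_pos_of_pos_of_lt_pi (by positivity) (by linarith [hangle.2, Real.pi_pos])
  have hcos : 0 ≤ Real.cos ((n + 1) * θ) :=
    Real.cos_nonneg_of_mem_Icc ⟨by linarith [hangle.1, Real.pi_pos], hangle.2⟩
  refine pos_of_mul_pos_right ?_ hsin.le
  rw [sin_mul_orbitDenom_two_mul_add_one, show n * θ = (n + 1) * θ - θ by ring, Real.sin_sub]
  nlinarith [mul_nonneg hcos hsin.le]

theorem orbitDenom_pos (hθ₀ : 0 < θ) (hθ : (P + 2) * θ = Real.pi / 2) (hr : Real.cos θ < r)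
    (hr₁ : r < 1) {k : ℕ} (hk : k ≤ 2 * P + 3) : 0 < orbitDenom (2 * Real.cos θ) r k := by
  obtain ⟨n, rfl | rfl⟩ := Nat.even_or_odd' k
  · exact orbitDenom_two_mul_pos hθ₀ hθ hr₁ (by omega)
  · exact orbitDenom_two_mul_add_one_pos hθ₀ hθ hr (by omega)

theorem sin_add_one_mul_eq_cos {a : ℝ} (hθ : (a + 2) * θ = Real.pi / 2) :
    Real.sin ((a + 1) * θ) = Real.cos θ := by
  rw [← Real.sin_pi_div_two_sub, ← hθ]
  ring_nf

theorem sin_add_three_mul_eq_cos {a : ℝ} (hθ : (a + 2) * θ = Real.pi / 2) :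
    Real.sin ((a + 3) * θ) = Real.cos θ := by
  rw [← Real.sin_add_pi_div_two, ← hθ]
  ring_nf

theorem sin_mul_orbitDenom_add_two (hθ : (P + 2) * θ = Real.pi / 2) (r : ℝ) :
    Real.sin θ * orbitDenom (2 * Real.cos θ) r (2 * P + 2) = 1 - r * Real.cos θ := by
  have h := sin_mul_orbitDenom_two_mul r θ (P + 1)
  push_cast at h
  rwa [show (P : ℝ) + 1 + 1 = P + 2 by ring, hθ, Real.sin_pi_div_two,
    sin_add_one_mul_eq_cos hθ] at h

theorem sin_mul_orbitDenom_add_three (hθ : (P + 2) * θ = Real.pi / 2) (r : ℝ) :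
    Real.sin θ * orbitDenom (2 * Real.cos θ) r (2 * P + 3) = r - Real.cos θ := by
  have h := sin_mul_orbitDenom_two_mul_add_one r θ (P + 1)
  push_cast at h
  rwa [show (P : ℝ) + 1 + 1 = P + 2 by ring, hθ, Real.sin_pi_div_two, mul_one,
    sin_add_one_mul_eq_cos hθ] at h

theorem orbitDenom_add_four_eq_neg (hθ₀ : 0 < θ) (hθ : (P + 2) * θ = Real.pi / 2) (r : ℝ) :
    orbitDenom (2 * Real.cos θ) r (2 * P + 4) = -orbitDenom (2 * Real.cos θ) r (2 * P + 3) := by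
  refine mul_left_cancel₀ (sin_pos_of_add_two_mul_eq hθ₀ hθ).ne' ?_
  have h := sin_mul_orbitDenom_two_mul r θ (P + 2)
  push_cast at h
  rw [show (P : ℝ) + 2 + 1 = P + 3 by ring, hθ, Real.sin_pi_div_two,
    sin_add_three_mul_eq_cos hθ] at h
  rw [mul_neg, sin_mul_orbitDenom_add_three hθ]
  exact h.trans (by ring)

theorem orbitDenom_add_five_eq_neg (hθ₀ : 0 < θ) (hθ : (P + 2) * θ = Real.pi / 2) (r : ℝ) :
    orbitDenom (2 * Real.cos θ) r (2 * P + 5) = -orbitDenom (2 * Real.cos θ) r (2 * P + 2) := by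
  refine mul_left_cancel₀ (sin_pos_of_add_two_mul_eq hθ₀ hθ).ne' ?_
  have h := sin_mul_orbitDenom_two_mul_add_one r θ (P + 2)
  push_cast at h
  rw [show (P : ℝ) + 2 + 1 = P + 3 by ring, hθ, Real.sin_pi_div_two,
    sin_add_three_mul_eq_cos hθ] at h
  rw [mul_neg, sin_mul_orbitDenom_add_two hθ]
  exact h.trans (by ring)

end OrbitDenom

section CornerHeight

variable {φ : ℝ} {P : ℕ}

/-- The heights `H₁, H₂, …` of the domain in a common form, with `φ = π / (4 * p)`:
`cornerHeight φ k` is `H_{k+1}`. -/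
noncomputable def cornerHeight (φ : ℝ) (k : ℕ) : ℝ :=
  Real.sin ((k + 1) * φ) / Real.sin ((k + 3) * φ)

theorem cornerHeight_zero (hsin : Real.sin φ ≠ 0) :
    cornerHeight φ 0 = 1 / (2 * Real.cos (2 * φ) + 1) := by
  have htriple : Real.sin (3 * φ) = Real.sin φ * (2 * Real.cos (2 * φ) + 1) := by
    rw [Real.sin_three_mul, Real.cos_two_mul, Real.cos_sq']
    ring
  rw [cornerHeight, Nat.cast_zero, zero_add, zero_add, one_mul, htriple, div_mul_cancel_left₀ hsin,
    one_div]

theorem cornerHeight_one (hsin : Real.sin (2 * φ) ≠ 0) :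
    cornerHeight φ 1 = 1 / (2 * Real.cos (2 * φ)) := by
  rw [cornerHeight, Nat.cast_one, one_add_one_eq_two, show (1 + 3) * φ = 2 * (2 * φ) by ring,
    Real.sin_two_mul (2 * φ), mul_right_comm, div_mul_cancel_right₀ hsin, one_div]

theorem cornerHeight_add_two {k : ℕ} (hsin : Real.sin ((k + 3) * φ) ≠ 0) :
    cornerHeight φ (k + 2) = 1 / (2 * Real.cos (2 * φ) - cornerHeight φ k) := by
  have hadd : Real.sin ((k + 5) * φ)
      = 2 * Real.cos (2 * φ) * Real.sin ((k + 3) * φ) - Real.sin ((k + 1) * φ) := by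
    rw [show (k + 5) * φ = (k + 3) * φ + 2 * φ by ring,
      show (k + 1) * φ = (k + 3) * φ - 2 * φ by ring, Real.sin_add, Real.sin_sub]
    ring
  rw [cornerHeight, cornerHeight, sub_div' hsin, one_div_div, ← hadd]
  push_cast
  ring_nf

theorem cornerHeight_two_mul (n : ℕ) (hsin : Real.sin φ ≠ 0) :
    cornerHeight φ (2 * n) = (Real.cos ((n + 1) * (2 * φ)) - Real.cos (n * (2 * φ)))
      / (Real.cos ((n + 2) * (2 * φ)) - Real.cos ((n + 1) * (2 * φ))) := by
  rw [Real.cos_sub_cos, Real.cos_sub_cos,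
    show ((n + 1) * (2 * φ) + n * (2 * φ)) / 2 = (2 * n + 1) * φ by ring,
    show ((n + 1) * (2 * φ) - n * (2 * φ)) / 2 = φ by ring,
    show ((n + 2) * (2 * φ) + (n + 1) * (2 * φ)) / 2 = (2 * n + 3) * φ by ring,
    show ((n + 2) * (2 * φ) - (n + 1) * (2 * φ)) / 2 = φ by ring,
    mul_div_mul_right _ _ hsin, mul_div_mul_left _ _ (by norm_num), cornerHeight]
  push_cast
  rfl

theorem cornerHeight_two_mul_add_one (φ : ℝ) (n : ℕ) :
    cornerHeight φ (2 * n + 1)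
      = Real.sin ((n + 1) * (2 * φ)) / Real.sin ((n + 2) * (2 * φ)) := by
  rw [cornerHeight]
  push_cast
  ring_nf

theorem cornerHeight_le_succ {k : ℕ} (hφ₀ : 0 < φ) (hk : (k + 4) * φ < Real.pi) :
    cornerHeight φ k ≤ cornerHeight φ (k + 1) := by
  have hφk : 0 ≤ k * φ := by positivity
  have hsin₃ : 0 < Real.sin ((k + 3) * φ) :=
    Real.sin_pos_of_pos_of_lt_pi (by positivity) (by linarith)
  have hsin₄ : 0 < Real.sin ((k + 4) * φ) := Real.sin_pos_of_pos_of_lt_pi (by positivity) hk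
  have hcos : Real.cos (3 * φ) ≤ Real.cos φ :=
    Real.cos_le_cos_of_nonneg_of_le_pi hφ₀.le (by linarith) (by linarith)
  have houter := Real.two_mul_sin_mul_sin ((k + 4) * φ) ((k + 1) * φ)
  have hinner := Real.two_mul_sin_mul_sin ((k + 3) * φ) ((k + 2) * φ)
  rw [show (k + 4) * φ - (k + 1) * φ = 3 * φ by ring,
    show (k + 4) * φ + (k + 1) * φ = (2 * k + 5) * φ by ring] at houter
  rw [show (k + 3) * φ - (k + 2) * φ = φ by ring,
    show (k + 3) * φ + (k + 2) * φ = (2 * k + 5) * φ by ring] at hinner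
  rw [cornerHeight, cornerHeight, Nat.cast_succ, show (k : ℝ) + 1 + 1 = k + 2 by ring,
    show (k : ℝ) + 1 + 3 = k + 4 by ring, div_le_div_iff₀ hsin₃ hsin₄]
  linarith

theorem monotoneOn_cornerHeight (hφ₀ : 0 < φ) {n : ℕ} (hn : (n + 2) * φ < Real.pi) :
    MonotoneOn (cornerHeight φ) (Iio n) := by
  refine monotoneOn_of_le_add_one ordConnected_Iio fun k _ _ hk => cornerHeight_le_succ hφ₀ ?_
  have hk' : (k : ℝ) + 2 ≤ n := mod_cast hk
  nlinarith

theorem cornerHeight_of_add_three_mul_eq_pi_div_two {k : ℕ} (hk : (k + 3) * φ = Real.pi / 2) :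
    cornerHeight φ k = Real.cos (2 * φ) := by
  rw [cornerHeight, hk, show (k + 1) * φ = Real.pi / 2 - 2 * φ by linarith,
    Real.sin_pi_div_two_sub, Real.sin_pi_div_two, div_one]

theorem cornerHeight_of_add_two_mul_eq_pi_div_two {k : ℕ} (hk : (k + 2) * φ = Real.pi / 2)
    (hcos : Real.cos φ ≠ 0) : cornerHeight φ k = 1 := by
  rw [cornerHeight, show (k + 1) * φ = Real.pi / 2 - φ by linarith,
    show (k + 3) * φ = φ + Real.pi / 2 by linarith, Real.sin_pi_div_two_sub,
    Real.sin_add_pi_div_two, div_self hcos]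

end CornerHeight

section Breakpoint

variable {lam r θ : ℝ} {k m P : ℕ}

/-- The endpoints `r - lam = ℓ₀ < r₁ < ℓ₁ < r₂ < ⋯ < ℓ_{p-1} < r₀ = r` of the strips of the domain,
numbered from `0` to `m + 3 = 2 * p - 1`. -/
noncomputable def breakpoint (lam r : ℝ) (m k : ℕ) : ℝ :=
  if k < m + 3 then -orbitDenom lam r (k + 2) / orbitDenom lam r k else r

theorem breakpoint_of_lt (lam r : ℝ) (hk : k < m + 3) :
    breakpoint lam r m k = -orbitDenom lam r (k + 2) / orbitDenom lam r k := if_pos hk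

theorem breakpoint_last (lam r : ℝ) (m : ℕ) : breakpoint lam r m (m + 3) = r :=
  if_neg (lt_irrefl _)

theorem neg_one_div_breakpoint_sub (hk : k < m + 3) (h : orbitDenom lam r (k + 2) ≠ 0) :
    -1 / breakpoint lam r m k - lam = -orbitDenom lam r (k + 4) / orbitDenom lam r (k + 2) := by
  rw [breakpoint_of_lt lam r hk, orbitDenom_add_four, neg_div (orbitDenom lam r k),
    neg_div_neg_eq, one_div_div, neg_sub, sub_div, mul_div_cancel_right₀ _ h]

theorem breakpoint_penultimate (hθ₀ : 0 < θ) (hθ : (P + 2) * θ = Real.pi / 2) (r : ℝ) :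
    breakpoint (2 * Real.cos θ) r (2 * P) (2 * P + 2)
      = orbitDenom (2 * Real.cos θ) r (2 * P + 3) / orbitDenom (2 * Real.cos θ) r (2 * P + 2) := by
  rw [breakpoint_of_lt _ r (by omega), orbitDenom_add_four_eq_neg hθ₀ hθ, neg_neg]

theorem strictMonoOn_breakpoint (hθ₀ : 0 < θ) (hθ : (P + 2) * θ = Real.pi / 2)
    (hr : Real.cos θ < r) (hr₁ : r < 1) :
    StrictMonoOn (breakpoint (2 * Real.cos θ) r (2 * P)) (Iic (2 * P + 3)) := by
  have hsin := sin_pos_of_add_two_mul_eq hθ₀ hθ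
  have hcos : 0 < Real.cos θ := Real.cos_pos_of_mem_Ioo ⟨by linarith [Real.pi_pos],
    by nlinarith [(P.cast_nonneg : (0 : ℝ) ≤ P)]⟩
  refine strictMonoOn_of_lt_add_one ordConnected_Iic fun k _ _ hk => ?_
  have hpos : ∀ j ≤ 2 * P + 3, 0 < orbitDenom (2 * Real.cos θ) r j :=
    fun j => orbitDenom_pos hθ₀ hθ hr hr₁
  rcases (Nat.le_of_succ_le_succ hk : k ≤ 2 * P + 2).lt_or_eq with hk | rfl
  · rw [breakpoint_of_lt _ r (by omega), breakpoint_of_lt _ r (by omega), neg_div, neg_div,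
      neg_lt_neg_iff, div_lt_div_iff₀ (hpos _ (by omega)) (hpos _ (by omega))]
    exact orbitDenom_mul_lt (by linarith) (by nlinarith) k
  · change _ < breakpoint (2 * Real.cos θ) r (2 * P) (2 * P + 3)
    rw [breakpoint_penultimate hθ₀ hθ, breakpoint_last, div_lt_iff₀ (hpos _ (by omega)),
      ← mul_lt_mul_iff_right₀ hsin, sin_mul_orbitDenom_add_three hθ, mul_left_comm,
      sin_mul_orbitDenom_add_two hθ]
    have hsq : r ^ 2 < 1 := by nlinarith
    linarith [mul_pos hcos (sub_pos.2 hsq)]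

end Breakpoint

section EvenIndex

variable {lam α φ : ℝ} {P : ℕ}

theorem one_lt_two_mul_cos {θ : ℝ} (hθ₀ : 0 < θ) (hθ : (P + 2) * θ = Real.pi / 2) :
    1 < 2 * Real.cos θ := by
  have hlt : Real.cos (Real.pi / 3) < Real.cos θ :=
    Real.cos_lt_cos_of_nonneg_of_le_pi hθ₀.le (by linarith [Real.pi_pos])
      (by nlinarith [(P.cast_nonneg : (0 : ℝ) ≤ P)])
  rw [Real.cos_pi_div_three] at hlt
  linarith

theorem isRosenOrbit_breakpoint {θ : ℝ} (hθ₀ : 0 < θ) (hθ : (P + 2) * θ = Real.pi / 2)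
    (hlam : lam = 2 * Real.cos θ) (hα : 1 / 2 < α) (hα' : α * lam < 1) :
    IsRosenOrbit lam α (2 * P) (breakpoint lam (α * lam) (2 * P)) := by
  subst hlam
  have hlam := one_lt_two_mul_cos hθ₀ hθ
  have hr : Real.cos θ < α * (2 * Real.cos θ) := by nlinarith
  have hpos {k : ℕ} (hk : k ≤ 2 * P + 3) := orbitDenom_pos hθ₀ hθ hr hα' hk
  have hr₀ : α * (2 * Real.cos θ) ≠ 0 := by linarith
  exact
  { one_lt_lam := hlam
    half_lt_alpha := hα
    alpha_mul_lam_lt_one := hα'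
    strictMonoOn_break := strictMonoOn_breakpoint hθ₀ hθ hr hα'
    break_zero := by
      rw [breakpoint_of_lt _ _ (by omega)]
      simp only [orbitDenom]
      ring
    break_last := breakpoint_last _ _ _
    break_neg := by
      rw [breakpoint_of_lt _ _ (by omega), neg_div, neg_neg_iff_pos]
      exact div_pos (hpos le_rfl) (hpos (by omega))
    break_pos := by
      rw [breakpoint_penultimate hθ₀ hθ]
      exact div_pos (hpos le_rfl) (hpos (by omega))
    break_one := by
      rw [breakpoint_of_lt _ _ (by omega)]
      simp only [orbitDenom]
      rw [neg_sub, sub_div, mul_div_cancel_left₀ _ hr₀]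
    break_add_two := fun k hk => by
      rw [neg_one_div_breakpoint_sub (by omega) (hpos (by omega)).ne',
        breakpoint_of_lt _ _ (by omega)]
    one_div_break := by
      rw [neg_one_div_breakpoint_sub (by omega) (hpos le_rfl).ne',
        breakpoint_penultimate hθ₀ hθ, orbitDenom_add_five_eq_neg hθ₀ hθ, neg_neg, one_div_div] }

theorem isRosenHeight_cornerHeight (hφ₀ : 0 < φ) (hφ : (2 * P + 4) * φ = Real.pi / 2)
    (hlam : lam = 2 * Real.cos (2 * φ)) : IsRosenHeight lam (2 * P) (cornerHeight φ) := by
  subst hlam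
  have : (0 : ℝ) ≤ P := P.cast_nonneg
  have hsin {t : ℝ} (ht₀ : 0 < t) (ht : t ≤ 2 * P + 4) : Real.sin (t * φ) ≠ 0 :=
    (Real.sin_pos_of_pos_of_lt_pi (by positivity) (by nlinarith)).ne'
  have hcos : Real.cos φ ≠ 0 :=
    (Real.cos_pos_of_mem_Ioo ⟨by linarith [Real.pi_pos], by nlinarith⟩).ne'
  exact
  { monotoneOn_height := monotoneOn_cornerHeight hφ₀ (by push_cast; nlinarith)
    height_zero := cornerHeight_zero (by simpa using hsin one_pos (by linarith))
    height_one := cornerHeight_one (hsin two_pos (by linarith))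
    height_add_two := fun k hk => cornerHeight_add_two <| hsin (by positivity) <| by
      have : (k : ℝ) ≤ 2 * P := mod_cast hk
      linarith
    height_add_one := by
      rw [cornerHeight_of_add_three_mul_eq_pi_div_two (by push_cast; linarith),
        mul_div_cancel_left₀ _ two_ne_zero]
    height_last := cornerHeight_of_add_two_mul_eq_pi_div_two (by push_cast; linarith) hcos }

end EvenIndex

/-- For even `q = 2p` and `1/2 < α < 1/λ`, the natural extension map `𝒯_α` preserves the
measure with density `(1+xy)⁻²` on `Ω_α`. -/
theorem stmt7 (p q : ℕ) (hp : 2 ≤ p) (hq : q = 2 * p) (lam α : ℝ)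
    (hlam : lam = 2 * Real.cos (Real.pi / q))
    (hα1 : 1 / 2 < α) (hα2 : α < 1 / lam)
    (ℓ r : ℕ → ℝ)
    (hℓ : ∀ n, ℓ n = (Tmap lam α)^[n] ((α - 1) * lam))
    (hr : ∀ n, r n = (Tmap lam α)^[n] (α * lam))
    (Hodd Heven : ℕ → ℝ)
    (hHodd : ∀ n : ℕ, Hodd n =
      (Real.cos (n * Real.pi / (2 * (p : ℝ))) - Real.cos (((n : ℝ) - 1) * Real.pi / (2 * (p : ℝ))))
        / (Real.cos (((n : ℝ) + 1) * Real.pi / (2 * (p : ℝ)))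
          - Real.cos (n * Real.pi / (2 * (p : ℝ)))))
    (hHeven : ∀ n : ℕ, Heven n =
      Real.sin (n * Real.pi / (2 * (p : ℝ))) / Real.sin (((n : ℝ) + 1) * Real.pi / (2 * (p : ℝ))))
    (Ω : Set (ℝ × ℝ))
    (hΩ : Ω = (⋃ n ∈ Finset.Icc 1 (p - 1), Ico (ℓ (n - 1)) (r n) ×ˢ Icc (0 : ℝ) (Hodd n))
      ∪ (⋃ n ∈ Finset.Icc 1 (p - 1), Ico (r n) (ℓ n) ×ˢ Icc (0 : ℝ) (Heven n))
      ∪ Ico (ℓ (p - 1)) (r 0) ×ˢ Icc (0 : ℝ) (Hodd p)) :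
    ∀ A : Set (ℝ × ℝ), MeasurableSet A → A ⊆ Ω →
      ∫ z in (Tnat lam α) ⁻¹' A ∩ Ω, 1 / (1 + z.1 * z.2) ^ 2
        = ∫ z in A, 1 / (1 + z.1 * z.2) ^ 2 := by
  obtain ⟨P, rfl⟩ := Nat.exists_eq_add_of_le' hp
  obtain ⟨φ, hφ⟩ : ∃ φ, (2 * P + 4) * φ = Real.pi / 2 := ⟨_, mul_div_cancel₀ _ (by positivity)⟩
  have hφ₀ : 0 < φ := pos_of_mul_pos_right (hφ ▸ Real.pi_div_two_pos) (by positivity)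
  have hsin : Real.sin φ ≠ 0 := (Real.sin_pos_of_pos_of_lt_pi hφ₀ (by nlinarith)).ne'
  have hangle (t : ℝ) : t * Real.pi / (2 * (P + 2 : ℕ)) = t * (2 * φ) := by
    push_cast
    rw [div_eq_iff (by positivity)]
    linear_combination -(2 * t) * hφ
  have hlam' : lam = 2 * Real.cos (2 * φ) := by
    rw [hlam, hq, ← one_mul (2 * φ), ← hangle, one_mul, Nat.cast_mul, Nat.cast_ofNat]
  have hlam₀ : 0 < lam := one_div_pos.1 (one_half_pos.trans (hα1.trans hα2))
  have horbit := isRosenOrbit_breakpoint (P := P) (by positivity) (by linarith) hlam' hα1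
    ((lt_div_iff₀ hlam₀).1 hα2)
  have hodd (n : ℕ) : Hodd (n + 1) = cornerHeight φ (2 * n) := by
    rw [hHodd, cornerHeight_two_mul n hsin, hangle, hangle, hangle, Nat.cast_succ,
      add_sub_cancel_right, add_assoc, one_add_one_eq_two]
  have heven (n : ℕ) : Heven (n + 1) = cornerHeight φ (2 * n + 1) := by
    rw [hHeven, cornerHeight_two_mul_add_one, hangle, hangle, Nat.cast_succ, add_assoc,
      one_add_one_eq_two]
  have hΩ' := horbit.staircase_eq hodd heven
  simp only [hℓ, hr] at hΩ
  rw [show Ω = _ from hΩ.trans hΩ'.symm]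
  exact fun A => IsRosenStaircase.setIntegral_preimage_inter
    ⟨horbit, isRosenHeight_cornerHeight hφ₀ hφ hlam'⟩
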